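/- Let A and B be FDDS, let t_a be an unroll tree of 𝒰(A) and t_b an unroll tree of 𝒰(B). Suppose there exists an infinite rooted tree x (with finitely many vertices at each depth) such that t_a·x = t_b and such that the multiset {σ^i(t_a)·x : 0 ≤ i < |Shift(t_a)|} is a sub-multiset of 𝒰(B). Then x is an unroll tree, and the multiset {t_a·σ^j(x) : 0 ≤ j < |Shift(x)|} is a sub-multiset of 𝒰(B). -/

import Mathlib

noncomputable section

/-- A rooted tree (finite or infinite), presented by its levels: `level n` is the
set of vertices of depth `n` (finitely many at each depth), every vertex of depth
`n+1` has a parent of depth `n` (edges are directed towards the root), and there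
is a unique vertex of depth `0`, the root. -/
structure RTree : Type 1 where
  level : ℕ → Type
  parent : ∀ n, level (n + 1) → level n
  fin : ∀ n, Fintype (level n)
  root : level 0
  root_unique : ∀ x : level 0, x = root

namespace RTree

/-- Isomorphism of rooted trees: a depth-preserving bijection of the vertices
commuting with the parent maps (hence root- and edge-preserving). -/
def Iso (t s : RTree) : Prop :=
  ∃ e : ∀ n, t.level n ≃ s.level n,
    ∀ (n : ℕ) (x : t.level (n + 1)), e n (t.parent n x) = s.parent n (e (n + 1) x)

/-- The (layer-by-layer direct) product of two rooted trees. -/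
def tprod (t s : RTree) : RTree where
  level n := t.level n × s.level n
  parent n x := (t.parent n x.1, s.parent n x.2)
  fin n := by haveI := t.fin n; haveI := s.fin n; infer_instance
  root := (t.root, s.root)
  root_unique x := by
    obtain ⟨a, b⟩ := x
    rw [t.root_unique a, s.root_unique b]

/-- The cut of a tree at depth `n`: the subtree induced on vertices of depth `≤ n`. -/
def tcut (t : RTree) (n : ℕ) : RTree where
  level k := PLift (k ≤ n) × t.level k
  parent k x := (⟨Nat.le_of_succ_le x.1.down⟩, t.parent k x.2)
  fin k := by
    haveI := t.fin k
    haveI : Finite (PLift (k ≤ n)) := Finite.of_subsingleton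
    exact Fintype.ofFinite _
  root := (⟨Nat.zero_le n⟩, t.root)
  root_unique x := by
    obtain ⟨a, b⟩ := x
    rw [t.root_unique b]

/-- A tree is finite when it has no vertices below some depth. -/
def IsFinite (t : RTree) : Prop := ∃ N, ∀ k, N ≤ k → IsEmpty (t.level k)

/-- The depth of a (finite) tree: the largest depth of one of its vertices. -/
def depth (t : RTree) : ℕ := sSup {n | Nonempty (t.level n)}

/-- `tpow t k` is the `k`-fold product `t^k` of the tree `t` with itself (for `k ≥ 1`). -/
def tpow (t : RTree) : ℕ → RTree
  | 0 => t
  | 1 => t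
  | n + 2 => tprod t (tpow t (n + 1))

/-- Iterated parent map, sending a vertex of depth `k+1` to its ancestor of depth 1. -/
def down (t : RTree) : ∀ k, t.level (k + 1) → t.level 1
  | 0, x => x
  | k + 1, x => t.down k (t.parent (k + 1) x)

/-- The subtree of `t` rooted at the depth-1 vertex `v` (a child of the root). -/
def subtreeAt (t : RTree) (v : t.level 1) : RTree where
  level k := { x : t.level (k + 1) // t.down k x = v }
  parent k x := ⟨t.parent (k + 1) x.1, x.2⟩
  fin k := by haveI := t.fin (k + 1); exact Fintype.ofFinite _
  root := ⟨v, rfl⟩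
  root_unique x := Subtype.ext x.2

/-- `D t`: the forest (here, a list) of the subtrees of `t` rooted at the
children of the root. -/
def D (t : RTree) : List RTree := (@Finset.univ _ (t.fin 1)).toList.map t.subtreeAt

end RTree

/-- A forest is a finite multiset of rooted trees; we represent it by a list of
(concrete) trees, equality of forests being `ForestEq` below. -/
abbrev Forest := List RTree

/-- Equality of forests as multisets of isomorphism classes of rooted trees. -/
def ForestEq (F G : Forest) : Prop := Multiset.Rel RTree.Iso (↑F) (↑G)

/-- `F` is a sub-multiset of `G` up to isomorphism of rooted trees. -/
def ForestLe (F G : Forest) : Prop :=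
  ∃ H : Multiset RTree, H ≤ (↑G : Multiset RTree) ∧ Multiset.Rel RTree.Iso (↑F) H

/-- The product of two forests: the multiset of pairwise products. -/
def fprod (F G : Forest) : Forest := (F.map fun t => G.map fun s => t.tprod s).flatten

/-- The cut of a forest at depth `n`. -/
def fcut (F : Forest) (n : ℕ) : Forest := F.map (RTree.tcut · n)

/-- The depth of a forest: maximum of the depths of its trees. -/
def fdepth (F : Forest) : ℕ := (F.map RTree.depth).foldr max 0

/-- `fpow F k` is the `k`-fold product `F^k` of the forest `F` with itself (for `k ≥ 1`). -/
def fpow (F : Forest) : ℕ → Forest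
  | 0 => F
  | 1 => F
  | n + 2 => fprod F (fpow F (n + 1))

/-- `D` of a forest: the multiset union of the `D` of its trees. -/
def fD (F : Forest) : Forest := (F.map RTree.D).flatten

/-- `R F`: the rooted tree obtained by attaching each tree of the forest `F`
as a child subtree of a new common root, so that `D (R F) = F`. -/
def rollRoot (F : Forest) : RTree where
  level k :=
    match k with
    | 0 => PUnit
    | k + 1 => Σ i : Fin F.length, (F.get i).level k
  parent k :=
    match k with
    | 0 => fun _ => PUnit.unit
    | k + 1 => fun x => ⟨x.1, (F.get x.1).parent k x.2⟩
  fin k := by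
    match k with
    | 0 => exact inferInstanceAs (Fintype PUnit)
    | k + 1 =>
      haveI : ∀ i : Fin F.length, Fintype ((F.get i).level k) := fun i => (F.get i).fin k
      exact inferInstanceAs (Fintype (Σ i : Fin F.length, (F.get i).level k))
  root := PUnit.unit
  root_unique _ := rfl

/-- The number of vertices of depth `d` in a forest. -/
def levelCard (F : Forest) (d : ℕ) : ℕ := (F.map fun t => @Fintype.card _ (t.fin d)).sum

/-- The total number of vertices of a (finite) forest. -/
def totalCard (F : Forest) : ℕ := ∑ d ∈ Finset.range (fdepth F + 1), levelCard F d

/-- A finite discrete-time dynamical system: a finite set of states together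
with a transition function. -/
structure FDDS : Type 1 where
  S : Type
  fin : Fintype S
  f : S → S

namespace FDDS

/-- A state is periodic when some positive iterate of the transition function fixes it. -/
def Periodic (A : FDDS) (u : A.S) : Prop := ∃ p, 1 ≤ p ∧ A.f^[p] u = u

/-- The least `k` such that `f^[k] s` is periodic. -/
def depthOf (A : FDDS) (s : A.S) : ℕ := sInf {k | A.Periodic (A.f^[k] s)}

/-- The depth of an FDDS: the maximum over states `s` of the least `k` such
that `f^[k] s` is periodic. -/
def depth (A : FDDS) : ℕ := sSup {d | ∃ s : A.S, d = A.depthOf s}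

/-- The functional digraph of `A` has a single (weakly) connected component. -/
def Connected (A : FDDS) : Prop := ∀ s s' : A.S, ∃ k l, A.f^[k] s = A.f^[l] s'

/-- The unroll tree of `A` in the state `u`: vertices of depth `k` are the
`k`-th preimages of `u`, the parent of `(v,k+1)` being `(f v, k)`. -/
def unrollTree (A : FDDS) (u : A.S) : RTree where
  level k := { s : A.S // A.f^[k] s = u }
  parent k x := ⟨A.f x.1, by rw [← Function.iterate_succ_apply]; exact x.2⟩
  fin k := by haveI := A.fin; exact Fintype.ofFinite _
  root := ⟨u, rfl⟩
  root_unique x := Subtype.ext x.2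

/-- The unroll of `A`: the multiset of the unroll trees of `A` in its periodic states. -/
def unroll (A : FDDS) : Forest :=
  haveI := A.fin
  letI : DecidablePred A.Periodic := Classical.decPred _
  (Finset.univ.filter A.Periodic).toList.map A.unrollTree

/-- The minimal period of a periodic state. -/
def minPeriod (A : FDDS) (u : A.S) : ℕ := sInf {p | 1 ≤ p ∧ A.f^[p] u = u}

/-- The periodic state `w` with `f^[i] w = u`: the `i`-th "shift" of `u`
backwards along its cycle. -/
def shiftState (A : FDDS) (u : A.S) (i : ℕ) : A.S := A.f^[i * (A.minPeriod u - 1)] u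

/-- The shift `σ^i(t)` of the unroll tree `t = unrollTree A u`: the unroll tree
rooted at the depth-`i` vertex of the infinite branch of `t`. -/
def shiftTree (A : FDDS) (u : A.S) (i : ℕ) : RTree := A.unrollTree (A.shiftState u i)

/-- The unroll tree of `A` in `u` admits a periodic pattern of size `p ≥ 1`,
i.e. `σ^p(t_u) = t_u`. -/
def PatternSize (A : FDDS) (u : A.S) (p : ℕ) : Prop :=
  1 ≤ p ∧ RTree.Iso (A.shiftTree u p) (A.unrollTree u)

/-- `|Shift(t_u)|`: the smallest size of a periodic pattern of the unroll tree of `A` in `u`. -/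
def shiftCount (A : FDDS) (u : A.S) : ℕ := sInf {p | A.PatternSize u p}

end FDDS

/-- A rooted tree is an unroll tree when it is isomorphic to the unroll tree of
some FDDS in one of its periodic states. -/
def IsUnrollTree (x : RTree) : Prop :=
  ∃ (A : FDDS) (u : A.S), A.Periodic u ∧ RTree.Iso x (A.unrollTree u)

end

/-!
Two facts carry the argument. First, a tree with an infinite branch is cancellable in a product:
a tree is determined by the numbers of homomorphisms from finite trees into it, these numbers are
multiplicative in the target, and those into a tree with an infinite branch are positive. That the
numbers determine the tree is linear independence of characters: gluing finite trees at their roots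
makes them a monoid on which counting homomorphisms is multiplicative, so the homomorphism counts of
the children of a vertex can be recovered, as a multiset, from their sum.

Second, shifting is compatible with products. A common period `P` of `t_a` and `t_b` therefore gives
`t_a · x = t_b = σ^P(t_b) = t_a · σ^P(x)`, hence `x = σ^P(x)`, and `x` can be rolled up into an
FDDS. Finally, given `j`, choose `i` with `σ^(i+j)(t_a) = t_a`: shifting `σ^i(t_a) · x ∈ 𝒰(B)` by
`j` shows that `t_a · σ^j(x) ∈ 𝒰(B)`, and by cancellation these trees are pairwise distinct for
`j < |Shift(x)|`.
-/

namespace RTree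

/-! ### Isomorphisms -/

theorem Iso.refl (t : RTree) : t.Iso t :=
  ⟨fun _ => Equiv.refl _, fun _ _ => rfl⟩

theorem Iso.symm {t s : RTree} (h : t.Iso s) : s.Iso t := by
  obtain ⟨e, he⟩ := h
  refine ⟨fun n => (e n).symm, fun n x => ?_⟩
  rw [Equiv.symm_apply_eq, he, Equiv.apply_symm_apply]

theorem Iso.trans {t s r : RTree} (h : t.Iso s) (h' : s.Iso r) : t.Iso r := by
  obtain ⟨e, he⟩ := h
  obtain ⟨e', he'⟩ := h'
  refine ⟨fun n => (e n).trans (e' n), fun n x => ?_⟩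
  simp only [Equiv.trans_apply, he, he']

theorem Iso.tprod {t t' s s' : RTree} (h : t.Iso t') (h' : s.Iso s') :
    (t.tprod s).Iso (t'.tprod s') := by
  obtain ⟨e, he⟩ := h
  obtain ⟨e', he'⟩ := h'
  exact ⟨fun n => (e n).prodCongr (e' n), fun n x => Prod.ext (he n x.1) (he' n x.2)⟩

/-- A sequence of vertices, one at each depth, is an infinite branch of `t`. -/
def IsBranch (t : RTree) (b : ∀ k, t.level k) : Prop :=
  ∀ k, t.parent k (b (k + 1)) = b k

theorem IsBranch.prodMk {t s : RTree} {a : ∀ k, t.level k} {b : ∀ k, s.level k}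
    (ha : t.IsBranch a) (hb : s.IsBranch b) : (t.tprod s).IsBranch fun k => (a k, b k) :=
  fun k => Prod.ext (ha k) (hb k)

/-! ### Counting homomorphisms from finite trees -/

/-- The type of children of a vertex of a rooted tree. -/
abbrev Children (t : RTree) {k : ℕ} (v : t.level k) : Type :=
  {c : t.level (k + 1) // t.parent k c = v}

instance (t : RTree) (k : ℕ) : Fintype (t.level k) := t.fin k

noncomputable instance (t : RTree) {k : ℕ} (v : t.level k) : Fintype (t.Children v) :=
  Fintype.ofFinite _

theorem exists_equiv_of_children {t s : RTree} {R : ∀ {k}, t.level k → s.level k → Prop}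
    (hroot : R t.root s.root)
    (hR : ∀ {k} {v : t.level k} {w : s.level k}, R v w →
      ∃ σ : t.Children v ≃ s.Children w, ∀ c, R c.1 (σ c).1) : t.Iso s := by
  have extend : ∀ k (e : {e : t.level k ≃ s.level k // ∀ v, R v (e v)}),
      ∃ e' : {e : t.level (k + 1) ≃ s.level (k + 1) // ∀ v, R v (e v)},
        ∀ x, e.1 (t.parent k x) = s.parent k (e'.1 x) := by
    rintro k ⟨e, he⟩
    choose σ hσ using fun v => hR (he v)
    let e' : t.level (k + 1) ≃ s.level (k + 1) :=
      (Equiv.sigmaFiberEquiv (t.parent k)).symm.trans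
        ((Equiv.sigmaCongr e σ).trans (Equiv.sigmaFiberEquiv (s.parent k)))
    exact ⟨⟨e', fun c => hσ _ ⟨c, rfl⟩⟩, fun c => (σ _ ⟨c, rfl⟩).2.symm⟩
  choose next hnext using extend
  let e₀ : t.level 0 ≃ s.level 0 :=
    ⟨fun _ => s.root, fun _ => t.root, fun v => (t.root_unique v).symm,
      fun w => (s.root_unique w).symm⟩
  let e : ∀ k, {e : t.level k ≃ s.level k // ∀ v, R v (e v)} := fun k =>
    Nat.rec ⟨e₀, fun v => t.root_unique v ▸ hroot⟩ next k
  exact ⟨fun k => (e k).1, fun k x => hnext k (e k) x⟩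

/-- Finite plane trees of depth at most `n` whose root has exactly one child. Such a tree is given
by the list of the planted trees hanging from that child; `FreeMonoid (PlantedTree n)` is thus the
monoid of all finite plane trees of depth at most `n`, multiplication being gluing at the roots. -/
def PlantedTree : ℕ → Type
  | 0 => Empty
  | n + 1 => FreeMonoid (PlantedTree n)

/-- The number of homomorphisms from a finite tree of depth at most `n` to `t` that send the root
to the vertex `v`. -/
noncomputable def homCount (t : RTree) :
    ∀ (n : ℕ) {k : ℕ}, t.level k → (FreeMonoid (PlantedTree n) →* ℕ)
  | 0, _, _ => 1
  | n + 1, _, v => FreeMonoid.lift fun p : FreeMonoid (PlantedTree n) =>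
      ∑ c : t.Children v, homCount t n c.1 p

theorem homCount_succ_of (t : RTree) (n : ℕ) {k : ℕ} (v : t.level k)
    (p : FreeMonoid (PlantedTree n)) :
    homCount t (n + 1) v (FreeMonoid.of (α := PlantedTree (n + 1)) p) =
      ∑ c : t.Children v, homCount t n c.1 p := by
  rw [homCount]
  exact FreeMonoid.lift_eval_of _ _

theorem hom_plantedTree_zero_ext {M : Type*} [Monoid M] (φ ψ : FreeMonoid (PlantedTree 0) →* M) :
    φ = ψ :=
  FreeMonoid.hom_eq fun p : Empty => p.elim

theorem hom_plantedTree_succ_ext {M : Type*} [Monoid M] {n : ℕ}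
    {φ ψ : FreeMonoid (PlantedTree (n + 1)) →* M}
    (h : ∀ p : FreeMonoid (PlantedTree n),
      φ (FreeMonoid.of (α := PlantedTree (n + 1)) p) =
        ψ (FreeMonoid.of (α := PlantedTree (n + 1)) p)) : φ = ψ :=
  FreeMonoid.hom_eq h

theorem homCount_succ_congr {t s : RTree} {n k l : ℕ} {v : t.level k} {w : s.level l}
    (σ : t.Children v ≃ s.Children w) (hσ : ∀ c, homCount t n c.1 = homCount s n (σ c).1) :
    homCount t (n + 1) v = homCount s (n + 1) w := by
  refine hom_plantedTree_succ_ext fun p => ?_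
  rw [homCount_succ_of, homCount_succ_of]
  exact Fintype.sum_equiv σ _ _ fun c => DFunLike.congr_fun (hσ c) p

/-- The children of a vertex of a product are the pairs of children. -/
def childrenProdEquiv (t s : RTree) {k : ℕ} (v : (t.tprod s).level k) :
    (t.tprod s).Children v ≃ t.Children v.1 × s.Children v.2 where
  toFun c := (⟨c.1.1, congrArg Prod.fst c.2⟩, ⟨c.1.2, congrArg Prod.snd c.2⟩)
  invFun c := ⟨(c.1.1, c.2.1), Prod.ext c.1.2 c.2.2⟩
  left_inv _ := rfl
  right_inv _ := rfl

theorem homCount_tprod (t s : RTree) (n : ℕ) {k : ℕ} (v : (t.tprod s).level k) :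
    homCount (t.tprod s) n v = homCount t n v.1 * homCount s n v.2 := by
  induction n generalizing k with
  | zero => exact hom_plantedTree_zero_ext _ _
  | succ n ih =>
    refine hom_plantedTree_succ_ext fun p => ?_
    rw [MonoidHom.mul_apply, homCount_succ_of, homCount_succ_of, homCount_succ_of,
      Fintype.sum_mul_sum, ← Fintype.sum_prod_type']
    exact Fintype.sum_equiv (childrenProdEquiv t s v) _ _ fun c => DFunLike.congr_fun (ih c.1) p

theorem homCount_equiv {t s : RTree} (e : ∀ n, t.level n ≃ s.level n)
    (he : ∀ n (x : t.level (n + 1)), e n (t.parent n x) = s.parent n (e (n + 1) x))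
    (n : ℕ) {k : ℕ} (v : t.level k) : homCount t n v = homCount s n (e k v) := by
  induction n generalizing k with
  | zero => exact hom_plantedTree_zero_ext _ _
  | succ n ih =>
    have hchild (c : t.level (k + 1)) : t.parent k c = v ↔ s.parent k (e (k + 1) c) = e k v := by
      rw [← he, (e k).apply_eq_iff_eq]
    exact homCount_succ_congr ((e (k + 1)).subtypeEquiv hchild) fun c => ih c.1

theorem Iso.homCount_root {t s : RTree} (h : t.Iso s) (n : ℕ) :
    homCount t n t.root = homCount s n s.root := by
  obtain ⟨e, he⟩ := h
  rw [homCount_equiv e he, s.root_unique (e 0 t.root)]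

theorem IsBranch.homCount_pos {t : RTree} {b : ∀ k, t.level k} (hb : t.IsBranch b) (n k : ℕ)
    (p : FreeMonoid (PlantedTree n)) : 0 < homCount t n (b k) p := by
  induction n generalizing k with
  | zero => exact Nat.one_pos
  | succ n ih =>
    induction p using FreeMonoid.recOn with
    | one => rw [map_one]; exact Nat.one_pos
    | of_mul q p hp =>
      rw [map_mul]
      refine Nat.mul_pos ?_ hp
      exact (homCount_succ_of t n (b k) q).symm ▸
        Finset.sum_pos' (fun _ _ => Nat.zero_le _) ⟨⟨b (k + 1), hb k⟩, Finset.mem_univ _, ih _ q⟩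

/-! ### Homomorphism counts determine the tree -/

theorem exists_equiv_of_sum_monoidHom_eq {M R α β : Type*} [Monoid M] [CommRing R] [IsDomain R]
    [CharZero R] [Fintype α] [Fintype β] {p : α → M →* R} {q : β → M →* R}
    (h : ∀ g, ∑ a, p a g = ∑ b, q b g) : ∃ σ : α ≃ β, ∀ a, p a = q (σ a) := by
  classical
  have hsingle : ∑ a, Finsupp.single (p a) (1 : R) = ∑ b, Finsupp.single (q b) (1 : R) := by
    refine linearIndependent_monoidHom M R ?_
    funext g
    simpa using h g
  have hfiber (χ : M →* R) : Nonempty ({a // p a = χ} ≃ {b // q b = χ}) := by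
    have hχ := DFunLike.congr_fun hsingle χ
    simp only [Finsupp.finsetSum_apply, Finsupp.single_apply, Finset.sum_boole] at hχ
    refine ⟨Fintype.equivOfCardEq ?_⟩
    rw [Fintype.card_subtype, Fintype.card_subtype]
    exact_mod_cast hχ
  let σ := fun χ => (hfiber χ).some
  exact ⟨(Equiv.sigmaFiberEquiv p).symm.trans
    ((Equiv.sigmaCongrRight σ).trans (Equiv.sigmaFiberEquiv q)), fun a => (σ _ ⟨a, rfl⟩).2.symm⟩

theorem exists_equiv_children_of_homCount_succ_eq {t s : RTree} {n k l : ℕ} {v : t.level k}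
    {w : s.level l} (h : homCount t (n + 1) v = homCount s (n + 1) w) :
    ∃ σ : t.Children v ≃ s.Children w, ∀ c, homCount t n c.1 = homCount s n (σ c).1 := by
  let ι : ℕ →* ℤ := (Nat.castRingHom ℤ).toMonoidHom
  obtain ⟨σ, hσ⟩ := exists_equiv_of_sum_monoidHom_eq
    (p := fun c : t.Children v => ι.comp (homCount t n c.1))
    (q := fun c : s.Children w => ι.comp (homCount s n c.1)) fun p => by
      have hp := DFunLike.congr_fun h (FreeMonoid.of (α := PlantedTree (n + 1)) p)
      rw [homCount_succ_of, homCount_succ_of] at hp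
      exact (map_sum (Nat.castRingHom ℤ) _ _).symm.trans <|
        (congrArg (Nat.castRingHom ℤ) hp).trans (map_sum _ _ _)
  exact ⟨σ, fun c => (MonoidHom.cancel_left (g := ι) Nat.cast_injective).1 (hσ c)⟩

theorem homCount_eq_of_le {t s : RTree} {m n k l : ℕ} {v : t.level k} {w : s.level l} (hmn : m ≤ n)
    (h : homCount t n v = homCount s n w) : homCount t m v = homCount s m w := by
  induction m generalizing n k l with
  | zero => exact hom_plantedTree_zero_ext _ _
  | succ m ih =>
    obtain ⟨n, rfl⟩ := Nat.exists_eq_add_of_le' (Nat.one_le_of_lt hmn)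
    obtain ⟨σ, hσ⟩ := exists_equiv_children_of_homCount_succ_eq h
    exact homCount_succ_congr σ fun c => ih (Nat.le_of_succ_le_succ hmn) (hσ c)

theorem exists_equiv_children_of_forall_homCount_eq {t s : RTree} {k l : ℕ} {v : t.level k}
    {w : s.level l} (h : ∀ n, homCount t n v = homCount s n w) :
    ∃ σ : t.Children v ≃ s.Children w, ∀ c n, homCount t n c.1 = homCount s n (σ c).1 := by
  classical
  -- Each of the finitely many bijections that fails does so at some `n`; take a larger `n`.
  by_contra! hcon
  choose c n hn using hcon
  obtain ⟨σ, hσ⟩ := exists_equiv_children_of_homCount_succ_eq (h (Finset.univ.sup n + 1))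
  exact hn σ (homCount_eq_of_le (Finset.le_sup (Finset.mem_univ σ)) (hσ _))

theorem iso_of_forall_homCount_root_eq {t s : RTree}
    (h : ∀ n, homCount t n t.root = homCount s n s.root) : t.Iso s :=
  exists_equiv_of_children (R := fun v w => ∀ n, homCount t n v = homCount s n w) h
    exists_equiv_children_of_forall_homCount_eq

theorem IsBranch.iso_of_tprod_iso_tprod {t x y : RTree} {b : ∀ k, t.level k} (hb : t.IsBranch b)
    (h : (t.tprod x).Iso (t.tprod y)) : x.Iso y := by
  refine iso_of_forall_homCount_root_eq fun n => MonoidHom.ext fun p => ?_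
  have hmul : homCount t n t.root * homCount x n x.root =
      homCount t n t.root * homCount y n y.root := by
    exact (homCount_tprod t x n _).symm.trans ((h.homCount_root n).trans (homCount_tprod t y n _))
  have hpos : 0 < homCount t n t.root p := t.root_unique (b 0) ▸ hb.homCount_pos n 0 p
  exact Nat.eq_of_mul_eq_mul_left hpos (DFunLike.congr_fun hmul p)

/-! ### Trunks -/

/-- The ancestor of depth `N` of a vertex of depth `N + k`. -/
def ancestor (t : RTree) (N : ℕ) : ∀ k, t.level (N + k) → t.level N
  | 0, y => y
  | k + 1, y => ancestor t N k (t.parent (N + k) y)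

/-- The full subtree of `t` rooted at the vertex `v` of depth `N`. For a vertex `v` of the infinite
branch of an unroll tree this is the shift `σ^N(t)`. -/
noncomputable def descendants (t : RTree) (N : ℕ) (v : t.level N) : RTree where
  level k := {y : t.level (N + k) // t.ancestor N k y = v}
  parent k y := ⟨t.parent (N + k) y.1, y.2⟩
  fin _ := Fintype.ofFinite _
  root := ⟨v, rfl⟩
  root_unique y := Subtype.ext y.2

theorem ancestor_equiv {t s : RTree} (e : ∀ n, t.level n ≃ s.level n)
    (he : ∀ n (x : t.level (n + 1)), e n (t.parent n x) = s.parent n (e (n + 1) x))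
    (N k : ℕ) (y : t.level (N + k)) :
    e N (t.ancestor N k y) = s.ancestor N k (e (N + k) y) := by
  induction k with
  | zero => rfl
  | succ k ih => exact (ih _).trans (congrArg (s.ancestor N k) (he (N + k) y))

theorem iso_descendants_equiv {t s : RTree} (e : ∀ n, t.level n ≃ s.level n)
    (he : ∀ n (x : t.level (n + 1)), e n (t.parent n x) = s.parent n (e (n + 1) x))
    (N : ℕ) (v : t.level N) : (t.descendants N v).Iso (s.descendants N (e N v)) := by
  have hmem (k : ℕ) (y : t.level (N + k)) :
      t.ancestor N k y = v ↔ s.ancestor N k (e (N + k) y) = e N v := by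
    rw [← ancestor_equiv e he, (e N).apply_eq_iff_eq]
  exact ⟨fun k => (e (N + k)).subtypeEquiv (hmem k), fun k y => Subtype.ext (he (N + k) y.1)⟩

theorem ancestor_tprod (t s : RTree) (N k : ℕ) (y : t.level (N + k)) (z : s.level (N + k)) :
    (t.tprod s).ancestor N k (y, z) = (t.ancestor N k y, s.ancestor N k z) := by
  induction k with
  | zero => rfl
  | succ k ih => exact ih (t.parent (N + k) y) (s.parent (N + k) z)

theorem tprod_descendants_iso (t s : RTree) (N : ℕ) (v : t.level N) (w : s.level N) :
    ((t.descendants N v).tprod (s.descendants N w)).Iso ((t.tprod s).descendants N (v, w)) := by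
  have hmem (k : ℕ) (y : t.level (N + k) × s.level (N + k)) :
      (t.ancestor N k y.1 = v ∧ s.ancestor N k y.2 = w) ↔
        (t.tprod s).ancestor N k y = (v, w) := by
    rw [← Prod.mk.injEq, ← ancestor_tprod]
    rfl
  exact ⟨fun k => (Equiv.subtypeProdEquivProd.symm).trans (Equiv.subtypeEquivRight (hmem k)),
    fun _ _ => rfl⟩

theorem IsBranch.ancestor_eq {t : RTree} {b : ∀ k, t.level k} (hb : t.IsBranch b) (N k : ℕ) :
    t.ancestor N k (b (N + k)) = b N := by
  induction k with
  | zero => rfl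
  | succ k ih => exact (congrArg (t.ancestor N k) (hb (N + k))).trans ih

/-- `b` is an infinite branch of `t` and the trees hooked at its vertices have bounded depth. -/
structure IsTrunk (t : RTree) (b : ∀ k, t.level k) : Prop where
  isBranch : t.IsBranch b
  exists_ancestor_eq : ∃ K, ∀ N k, K ≤ k → ∀ y : t.level (N + k), t.ancestor N k y = b N

theorem IsTrunk.eq_of_isBranch {t : RTree} {b c : ∀ k, t.level k} (hb : t.IsTrunk b)
    (hc : t.IsBranch c) : c = b := by
  obtain ⟨K, hK⟩ := hb.exists_ancestor_eq
  funext N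
  rw [← hc.ancestor_eq N K, hK N K le_rfl]

theorem IsTrunk.exists_of_iso {t s : RTree} {c : ∀ k, s.level k} (hc : s.IsTrunk c)
    (h : t.Iso s) : ∃ b, t.IsTrunk b := by
  obtain ⟨e, he⟩ := h.symm
  obtain ⟨K, hK⟩ := hc.exists_ancestor_eq
  refine ⟨fun k => e k (c k), fun k => ?_, K, fun N k hk y => ?_⟩
  · rw [← he, hc.isBranch k]
  · obtain ⟨z, rfl⟩ := (e (N + k)).surjective y
    rw [← ancestor_equiv e he, hK N k hk]

theorem IsTrunk.snd {t s : RTree} {c : ∀ k, (t.tprod s).level k}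
    (hc : (t.tprod s).IsTrunk c) (a : ∀ k, t.level k) : s.IsTrunk fun k => (c k).2 := by
  obtain ⟨K, hK⟩ := hc.exists_ancestor_eq
  refine ⟨fun k => congrArg Prod.snd (hc.isBranch k), K, fun N k hk y => ?_⟩
  rw [← hK N k hk (a (N + k), y), ancestor_tprod]

end RTree

/-! ### Periodic states and shifts -/

namespace FDDS

section PeriodicStates

variable {A : FDDS} {u s s' : A.S}

theorem Periodic.iterate (hu : A.Periodic u) (k : ℕ) : A.Periodic (A.f^[k] u) :=
  (Function.bijOn_periodicPts A.f).mapsTo.iterate k hu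

theorem Periodic.eq_of_iterate_eq (hs : A.Periodic s) (hs' : A.Periodic s') {k : ℕ}
    (h : A.f^[k] s = A.f^[k] s') : s = s' :=
  (Function.bijOn_periodicPts A.f).injOn.iterate (Function.bijOn_periodicPts A.f).mapsTo k hs hs' h

theorem exists_forall_periodic_iterate (A : FDDS) :
    ∃ K, ∀ k, K ≤ k → ∀ s, A.Periodic (A.f^[k] s) := by
  have : Fintype A.S := A.fin
  have hs (s : A.S) : ∃ i, A.Periodic (A.f^[i] s) := by
    obtain ⟨i, j, hij, h⟩ := Set.finite_univ.exists_lt_map_eq_of_forall_mem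
      (f := fun i : ℕ => A.f^[i] s) fun _ => Set.mem_univ _
    refine ⟨i, j - i, Nat.sub_pos_of_lt hij, ?_⟩
    rw [← Function.iterate_add_apply, Nat.sub_add_cancel hij.le]
    exact h.symm
  choose K hK using hs
  refine ⟨Finset.univ.sup K, fun k hk s => ?_⟩
  have hle : K s ≤ k := (Finset.le_sup (Finset.mem_univ s)).trans hk
  rw [← Nat.sub_add_cancel hle, Function.iterate_add_apply]
  exact (hK s).iterate _

theorem Periodic.minPeriod_pos (hu : A.Periodic u) : 0 < A.minPeriod u :=
  (Nat.sInf_mem (s := {p | 1 ≤ p ∧ A.f^[p] u = u}) hu).1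

theorem Periodic.isPeriodicPt_minPeriod (hu : A.Periodic u) :
    Function.IsPeriodicPt A.f (A.minPeriod u) u :=
  (Nat.sInf_mem (s := {p | 1 ≤ p ∧ A.f^[p] u = u}) hu).2

theorem Periodic.shiftState (hu : A.Periodic u) (i : ℕ) : A.Periodic (A.shiftState u i) :=
  hu.iterate _

theorem Periodic.iterate_shiftState (hu : A.Periodic u) (k : ℕ) :
    A.f^[k] (A.shiftState u k) = u := by
  have hk : k + k * (A.minPeriod u - 1) = k * A.minPeriod u := by
    rw [Nat.add_comm, ← Nat.mul_succ, Nat.succ_eq_add_one, Nat.sub_add_cancel hu.minPeriod_pos]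
  rw [FDDS.shiftState, ← Function.iterate_add_apply, hk]
  exact hu.isPeriodicPt_minPeriod.const_mul k

theorem Periodic.eq_shiftState (hu : A.Periodic u) (hs : A.Periodic s) {k : ℕ}
    (h : A.f^[k] s = u) : s = A.shiftState u k :=
  hs.eq_of_iterate_eq (hu.shiftState k) (h.trans (hu.iterate_shiftState k).symm)

theorem Periodic.shiftState_shiftState (hu : A.Periodic u) (i j : ℕ) :
    A.shiftState (A.shiftState u i) j = A.shiftState u (i + j) := by
  refine hu.eq_shiftState ((hu.shiftState i).shiftState j) ?_
  rw [Function.iterate_add_apply, (hu.shiftState i).iterate_shiftState, hu.iterate_shiftState]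

theorem Periodic.shiftState_of_minPeriod_dvd (hu : A.Periodic u) {n : ℕ}
    (hn : A.minPeriod u ∣ n) : A.shiftState u n = u :=
  (hu.eq_shiftState hu (hu.isPeriodicPt_minPeriod.trans_dvd hn)).symm

theorem Periodic.exists_shiftState_add_eq_self (hu : A.Periodic u) (i : ℕ) :
    ∃ k, A.shiftState u (i + k) = u := by
  refine ⟨i * (A.minPeriod u - 1), hu.shiftState_of_minPeriod_dvd ⟨i, ?_⟩⟩
  obtain ⟨p, hp⟩ := Nat.exists_eq_add_of_le' hu.minPeriod_pos
  rw [hp, Nat.add_sub_cancel]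
  ring

end PeriodicStates

section UnrollTrees

variable {A B : FDDS} {u : A.S} {v : B.S} {t x : RTree}

/-- The infinite branch of an unroll tree. -/
noncomputable def branch (hu : A.Periodic u) (k : ℕ) : (A.unrollTree u).level k :=
  ⟨A.shiftState u k, hu.iterate_shiftState k⟩

theorem coe_ancestor_unrollTree (u : A.S) (N k : ℕ) (y : (A.unrollTree u).level (N + k)) :
    ((A.unrollTree u).ancestor N k y).1 = A.f^[k] y.1 := by
  induction k with
  | zero => rfl
  | succ k ih => exact ih ((A.unrollTree u).parent (N + k) y)

theorem isTrunk_branch (hu : A.Periodic u) : (A.unrollTree u).IsTrunk (branch hu) := by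
  obtain ⟨K, hK⟩ := A.exists_forall_periodic_iterate
  refine ⟨fun k => Subtype.ext ?_, K, fun N k hk y => Subtype.ext ?_⟩
  · refine hu.eq_shiftState ((hu.shiftState (k + 1)).iterate 1) ?_
    exact hu.iterate_shiftState (k + 1)
  · refine hu.eq_shiftState ?_ ((A.unrollTree u).ancestor N k y).2
    rw [coe_ancestor_unrollTree]
    exact hK k hk _

theorem descendants_branch_iso_shiftTree (hu : A.Periodic u) (N : ℕ) :
    ((A.unrollTree u).descendants N (branch hu N)).Iso (A.shiftTree u N) := by
  refine ⟨fun k => ⟨fun y => ⟨y.1.1, ?_⟩, fun y => ⟨⟨y.1, ?_⟩, Subtype.ext ?_⟩,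
    fun _ => rfl, fun _ => rfl⟩, fun _ _ => rfl⟩
  · rw [← coe_ancestor_unrollTree, y.2, branch]
  · rw [Function.iterate_add_apply, y.2, hu.iterate_shiftState]
  · exact (coe_ancestor_unrollTree u N k _).trans y.2

theorem descendants_iso_shiftTree {b : ∀ k, t.level k} (hb : t.IsBranch b) (hv : B.Periodic v)
    (h : t.Iso (B.unrollTree v)) (N : ℕ) : (t.descendants N (b N)).Iso (B.shiftTree v N) := by
  obtain ⟨e, he⟩ := h
  have heb : (fun k => e k (b k)) = branch hv :=
    (isTrunk_branch hv).eq_of_isBranch fun k => by rw [← he, hb k]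
  have hdesc := RTree.iso_descendants_equiv e he N (b N)
  rw [show e N (b N) = branch hv N from congrFun heb N] at hdesc
  exact hdesc.trans (descendants_branch_iso_shiftTree hv N)

theorem shiftTree_iso_shiftTree (hu : A.Periodic u) (hv : B.Periodic v)
    (h : (A.unrollTree u).Iso (B.unrollTree v)) (N : ℕ) :
    (A.shiftTree u N).Iso (B.shiftTree v N) :=
  (descendants_branch_iso_shiftTree hu N).symm.trans
    (descendants_iso_shiftTree (isTrunk_branch hu).isBranch hv h N)

theorem shiftTree_tprod_descendants_iso {b : ∀ k, x.level k} (hb : x.IsBranch b)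
    (hu : A.Periodic u) (hv : B.Periodic v)
    (h : ((A.unrollTree u).tprod x).Iso (B.unrollTree v)) (N : ℕ) :
    ((A.shiftTree u N).tprod (x.descendants N (b N))).Iso (B.shiftTree v N) :=
  ((descendants_branch_iso_shiftTree hu N).symm.tprod (.refl _)).trans <|
    (RTree.tprod_descendants_iso _ _ _ _ _).trans <|
      descendants_iso_shiftTree ((isTrunk_branch hu).isBranch.prodMk hb) hv h N

theorem shiftTree_tprod_shiftTree_iso {C : FDDS} {w : C.S} (hu : A.Periodic u)
    (hw : C.Periodic w) (hv : B.Periodic v)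
    (h : ((A.unrollTree u).tprod (C.unrollTree w)).Iso (B.unrollTree v)) (N : ℕ) :
    ((A.shiftTree u N).tprod (C.shiftTree w N)).Iso (B.shiftTree v N) :=
  ((RTree.Iso.refl _).tprod (descendants_branch_iso_shiftTree hw N).symm).trans <|
    shiftTree_tprod_descendants_iso (isTrunk_branch hw).isBranch hu hv h N

end UnrollTrees

section ShiftCount

variable {A : FDDS} {u : A.S}

theorem Periodic.patternSize_shiftCount (hu : A.Periodic u) :
    A.PatternSize u (A.shiftCount u) := by
  refine Nat.sInf_mem (s := {p | A.PatternSize u p}) ⟨A.minPeriod u, hu.minPeriod_pos, ?_⟩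
  rw [shiftTree, hu.shiftState_of_minPeriod_dvd dvd_rfl]
  exact .refl _

theorem Periodic.shiftTree_add_shiftCount_iso (hu : A.Periodic u) (i : ℕ) :
    (A.shiftTree u (i + A.shiftCount u)).Iso (A.shiftTree u i) := by
  have h := shiftTree_iso_shiftTree (hu.shiftState _) hu hu.patternSize_shiftCount.2 i
  rwa [shiftTree, hu.shiftState_shiftState, Nat.add_comm] at h

theorem Periodic.shiftTree_mod_shiftCount_iso (hu : A.Periodic u) (i : ℕ) :
    (A.shiftTree u (i % A.shiftCount u)).Iso (A.shiftTree u i) := by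
  have hper : Function.Periodic (fun n => (A.shiftTree u n).Iso (A.shiftTree u i))
      (A.shiftCount u) := fun n =>
    propext ⟨(hu.shiftTree_add_shiftCount_iso n).symm.trans,
      (hu.shiftTree_add_shiftCount_iso n).trans⟩
  exact (hper.map_mod_nat i).mpr (.refl _)

theorem Periodic.not_shiftTree_iso_of_lt (hu : A.Periodic u) {i j : ℕ} (hij : i < j)
    (hj : j < A.shiftCount u) : ¬ (A.shiftTree u i).Iso (A.shiftTree u j) := by
  intro h
  obtain ⟨k, hk⟩ := hu.exists_shiftState_add_eq_self i
  have hjk : j + k = i + k + (j - i) := by omega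
  have hshift := shiftTree_iso_shiftTree (hu.shiftState i) (hu.shiftState j) h k
  rw [shiftTree, shiftTree, hu.shiftState_shiftState, hu.shiftState_shiftState, hjk,
    ← hu.shiftState_shiftState (i + k), hk] at hshift
  have hle : A.shiftCount u ≤ j - i :=
    Nat.sInf_le (s := {p | A.PatternSize u p}) ⟨Nat.sub_pos_of_lt hij, hshift.symm⟩
  omega

end ShiftCount

/-! ### Rolling up a periodic tree -/

section Covering

variable {t : RTree} {A : FDDS} {u : A.S} {ρ : ∀ k, t.level k → A.S}

theorem iterate_apply_of_map_parent (hroot : ρ 0 t.root = u)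
    (hf : ∀ k c, A.f (ρ (k + 1) c) = ρ k (t.parent k c)) {k : ℕ} (v : t.level k) :
    A.f^[k] (ρ k v) = u := by
  induction k with
  | zero => rw [t.root_unique v, Function.iterate_zero_apply, hroot]
  | succ k ih => rw [Function.iterate_succ_apply, hf, ih]

theorem iso_unrollTree_of_existsUnique_lift (hroot : ρ 0 t.root = u)
    (hf : ∀ k c, A.f (ρ (k + 1) c) = ρ k (t.parent k c))
    (hlift : ∀ k v s, A.f s = ρ k v → ∃! c, t.parent k c = v ∧ ρ (k + 1) c = s) :
    t.Iso (A.unrollTree u) := by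
  let e (k : ℕ) (v : t.level k) : (A.unrollTree u).level k :=
    ⟨ρ k v, iterate_apply_of_map_parent hroot hf v⟩
  have hinj (k : ℕ) : Function.Injective (ρ k) := by
    induction k with
    | zero => exact fun v w _ => (t.root_unique v).trans (t.root_unique w).symm
    | succ k ih =>
      intro c d hcd
      have hparent : t.parent k d = t.parent k c := ih (by rw [← hf, ← hf, hcd])
      exact (hlift k _ _ (hf k c)).unique ⟨rfl, rfl⟩ ⟨hparent, hcd.symm⟩
  have hsurj (k : ℕ) : Function.Surjective (e k) := by
    induction k with
    | zero => exact fun s => ⟨t.root, Subtype.ext (hroot.trans s.2.symm)⟩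
    | succ k ih =>
      intro s
      obtain ⟨v, hv⟩ := ih ((A.unrollTree u).parent k s)
      obtain ⟨c, ⟨-, hc⟩, -⟩ := hlift k v s.1 (congrArg Subtype.val hv).symm
      exact ⟨c, Subtype.ext hc⟩
  exact ⟨fun k => Equiv.ofBijective (e k)
    ⟨fun v w h => hinj k (congrArg Subtype.val h), hsurj k⟩,
    fun k c => Subtype.ext (hf k c).symm⟩

end Covering

end FDDS

/-- Two points are equivalent when their forward orbits under `f` meet. -/
def grandOrbitSetoid {α : Type*} (f : α → α) : Setoid α where
  r v w := ∃ m n, f^[m] v = f^[n] w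
  iseqv :=
    { refl := fun _ => ⟨0, 0, rfl⟩
      symm := fun ⟨m, n, h⟩ => ⟨n, m, h.symm⟩
      trans := fun {x y z} ⟨m, n, h⟩ ⟨m', n', h'⟩ => ⟨m' + m, n + n', by
        rw [Function.iterate_add_apply, h, Function.Commute.iterate_iterate_self f m' n y, h',
          ← Function.iterate_add_apply]⟩ }

namespace RTree

/-- The vertices of a rooted tree, of all depths; the first component is the depth. -/
abbrev Vertex (t : RTree) : Type := Σ k, t.level k

/-- The parent map on all vertices, with the junk value that the root is its own parent. -/
def up (t : RTree) : t.Vertex → t.Vertex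
  | ⟨0, v⟩ => ⟨0, v⟩
  | ⟨k + 1, v⟩ => ⟨k, t.parent k v⟩

theorem depth_up (t : RTree) (v : t.Vertex) : (t.up v).1 = v.1 - 1 := by
  obtain ⟨_ | k, v⟩ := v <;> rfl

/-- An isomorphism of `t` with the full subtree at one of its vertices, other than the root, such
that all but finitely many vertices of `t` lie in this subtree. -/
structure SelfEmbedding (t : RTree) where
  toFun : t.Vertex → t.Vertex
  shift : ℕ
  shift_pos : 0 < shift
  depth_toFun : ∀ v, (toFun v).1 = shift + v.1
  injective : Function.Injective toFun
  up_toFun : ∀ v, 0 < v.1 → t.up (toFun v) = toFun (t.up v)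
  mem_range_of_up : ∀ v w, t.up w = toFun v → w ∈ Set.range toFun
  finite_compl_range : (Set.range toFun)ᶜ.Finite

namespace SelfEmbedding

variable {t : RTree} (φ : t.SelfEmbedding)

theorem depth_toFun_pos (v : t.Vertex) : 0 < (φ.toFun v).1 := by
  rw [φ.depth_toFun]
  exact Nat.add_pos_left φ.shift_pos _

theorem depth_iterate (m : ℕ) (v : t.Vertex) : (φ.toFun^[m] v).1 = m * φ.shift + v.1 := by
  induction m with
  | zero => rw [Function.iterate_zero_apply, Nat.zero_mul, Nat.zero_add]
  | succ m ih => rw [Function.iterate_succ_apply', φ.depth_toFun, ih]; ring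

theorem up_iterate (m : ℕ) {v : t.Vertex} (hv : 0 < v.1) :
    t.up (φ.toFun^[m] v) = φ.toFun^[m] (t.up v) := by
  induction m with
  | zero => rfl
  | succ m ih =>
    have hpos : 0 < (φ.toFun^[m] v).1 := by rw [depth_iterate]; omega
    rw [Function.iterate_succ_apply', Function.iterate_succ_apply', φ.up_toFun _ hpos, ih]

theorem exists_iterate_eq_of_up_eq_iterate {n : ℕ} {v w : t.Vertex} (hw : 0 < w.1)
    (h : t.up w = φ.toFun^[n] v) : ∃ c, 0 < c.1 ∧ t.up c = v ∧ φ.toFun^[n] c = w := by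
  induction n generalizing w with
  | zero => exact ⟨w, hw, h, rfl⟩
  | succ n ih =>
    rw [Function.iterate_succ_apply'] at h
    obtain ⟨w, rfl⟩ := φ.mem_range_of_up _ _ h
    have hpos : 0 < w.1 := by
      have hdepth := congrArg Sigma.fst h
      rw [depth_up, φ.depth_toFun, φ.depth_toFun] at hdepth
      have := φ.shift_pos
      omega
    rw [φ.up_toFun _ hpos] at h
    obtain ⟨c, hc, hup, hcw⟩ := ih hpos (φ.injective h)
    exact ⟨c, hc, hup, by rw [Function.iterate_succ_apply', hcw]⟩

theorem exists_notMem_range_iterate_eq (v : t.Vertex) :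
    ∃ w ∉ Set.range φ.toFun, ∃ m, φ.toFun^[m] w = v := by
  induction hd : v.1 using Nat.strong_induction_on generalizing v with
  | _ d ih =>
    by_cases hv : v ∈ Set.range φ.toFun
    · obtain ⟨v, rfl⟩ := hv
      have hlt : v.1 < d := by
        rw [← hd, φ.depth_toFun]
        exact Nat.lt_add_of_pos_left φ.shift_pos
      obtain ⟨w, hw, m, rfl⟩ := ih _ hlt v rfl
      exact ⟨w, hw, m + 1, Function.iterate_succ_apply' _ _ _⟩
    · exact ⟨v, hv, 0, rfl⟩

theorem eq_of_grandOrbit_of_depth_eq {v w : t.Vertex} (h : grandOrbitSetoid φ.toFun v w)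
    (hd : v.1 = w.1) : v = w := by
  obtain ⟨m, n, hmn⟩ := h
  have hdepth := congrArg Sigma.fst hmn
  rw [depth_iterate, depth_iterate, hd, Nat.add_right_cancel_iff] at hdepth
  obtain rfl := Nat.eq_of_mul_eq_mul_right φ.shift_pos hdepth
  exact φ.injective.iterate m hmn

theorem grandOrbit_up_toFun {v w : t.Vertex} (h : grandOrbitSetoid φ.toFun v w) :
    grandOrbitSetoid φ.toFun (t.up (φ.toFun v)) (t.up (φ.toFun w)) := by
  obtain ⟨m, n, hmn⟩ := h
  refine ⟨m, n, ?_⟩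
  rw [← φ.up_iterate m (φ.depth_toFun_pos v), ← φ.up_iterate n (φ.depth_toFun_pos w),
    ← Function.iterate_succ_apply, ← Function.iterate_succ_apply, Function.iterate_succ_apply',
    Function.iterate_succ_apply', hmn]

instance : Finite (Quotient (grandOrbitSetoid φ.toFun)) := by
  have : Finite ((Set.range φ.toFun)ᶜ : Set t.Vertex) := φ.finite_compl_range
  refine Finite.of_surjective (fun w : ((Set.range φ.toFun)ᶜ : Set t.Vertex) => ⟦w.1⟧) ?_
  refine Quotient.ind fun v => ?_
  obtain ⟨w, hw, m, hwv⟩ := φ.exists_notMem_range_iterate_eq v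
  exact ⟨⟨w, hw⟩, Quotient.sound ⟨m, 0, hwv⟩⟩

/-- The FDDS obtained from `t` by identifying every vertex with its image under the embedding.
Transitions go to the parent, taken at the image of the vertex, which is never the root. -/
noncomputable def roll : FDDS where
  S := Quotient (grandOrbitSetoid φ.toFun)
  fin := Fintype.ofFinite _
  f := Quotient.map (fun v => t.up (φ.toFun v)) fun _ _ => φ.grandOrbit_up_toFun

/-- The state of `φ.roll` represented by a vertex of depth `k`. -/
def toRoll (k : ℕ) (v : t.level k) : φ.roll.S :=
  Quotient.mk (grandOrbitSetoid φ.toFun) ⟨k, v⟩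

theorem roll_f_toRoll_succ (k : ℕ) (c : t.level (k + 1)) :
    φ.roll.f (φ.toRoll (k + 1) c) = φ.toRoll k (t.parent k c) :=
  Quotient.sound ⟨0, 1, φ.up_toFun ⟨k + 1, c⟩ k.succ_pos⟩

theorem existsUnique_lift_toRoll (k : ℕ) (v : t.level k) (s : φ.roll.S)
    (h : φ.roll.f s = φ.toRoll k v) : ∃! c, t.parent k c = v ∧ φ.toRoll (k + 1) c = s := by
  induction s using Quotient.ind with | _ w
  obtain ⟨m, n, hmn⟩ := Quotient.exact h
  rw [← φ.up_iterate m (φ.depth_toFun_pos w), ← Function.iterate_succ_apply,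
    Function.iterate_succ_apply'] at hmn
  obtain ⟨⟨_ | l, c⟩, hc, hup, hcw⟩ :=
    φ.exists_iterate_eq_of_up_eq_iterate (φ.depth_toFun_pos _) hmn
  · exact absurd hc (lt_irrefl _)
  obtain ⟨rfl, hparent⟩ := Sigma.mk.inj hup
  have hcs : φ.toRoll (l + 1) c = Quotient.mk (grandOrbitSetoid φ.toFun) w :=
    Quotient.sound ⟨n, m + 1, by rw [hcw, Function.iterate_succ_apply']⟩
  refine ⟨c, ⟨eq_of_heq hparent, hcs⟩, fun d ⟨_, hd⟩ => ?_⟩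
  have hdc := φ.eq_of_grandOrbit_of_depth_eq (Quotient.exact (hd.trans hcs.symm)) rfl
  exact eq_of_heq (Sigma.mk.inj hdc).2

theorem periodic_toRoll_root : φ.roll.Periodic (φ.toRoll 0 t.root) := by
  obtain ⟨⟨k, v⟩, hφ⟩ : ∃ z, φ.toFun ⟨0, t.root⟩ = z := ⟨_, rfl⟩
  have hk : k = φ.shift := by simpa only [hφ, Nat.add_zero] using φ.depth_toFun ⟨0, t.root⟩
  have hv : φ.toRoll k v = φ.toRoll 0 t.root := Quotient.sound ⟨0, 1, hφ.symm⟩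
  refine ⟨k, hk ▸ φ.shift_pos, ?_⟩
  conv_lhs => rw [← hv]
  exact FDDS.iterate_apply_of_map_parent rfl φ.roll_f_toRoll_succ v

include φ in
theorem isUnrollTree : IsUnrollTree t :=
  ⟨φ.roll, _, φ.periodic_toRoll_root,
    FDDS.iso_unrollTree_of_existsUnique_lift rfl φ.roll_f_toRoll_succ φ.existsUnique_lift_toRoll⟩

end SelfEmbedding

theorem IsTrunk.nonempty_selfEmbedding {t : RTree} {b : ∀ k, t.level k} (hb : t.IsTrunk b) {N : ℕ}
    (hN : 0 < N) (h : t.Iso (t.descendants N (b N))) : Nonempty t.SelfEmbedding := by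
  obtain ⟨e, he⟩ := h
  obtain ⟨K, hK⟩ := hb.exists_ancestor_eq
  let φ (v : t.Vertex) : t.Vertex := ⟨N + v.1, (e v.1 v.2).1⟩
  have hrange (k : ℕ) (y : t.level (N + k)) (hy : t.ancestor N k y = b N) :
      (⟨N + k, y⟩ : t.Vertex) ∈ Set.range φ :=
    ⟨⟨k, (e k).symm ⟨y, hy⟩⟩, Sigma.ext rfl <| heq_of_eq <|
      congrArg Subtype.val ((e k).apply_symm_apply ⟨y, hy⟩)⟩
  refine ⟨⟨φ, N, hN, fun _ => rfl, ?_, ?_, ?_, ?_⟩⟩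
  · rintro ⟨k, v⟩ ⟨l, w⟩ h
    obtain rfl : k = l := Nat.add_left_cancel (congrArg Sigma.fst h)
    have hvw : v = w := (e k).injective (Subtype.ext (eq_of_heq (Sigma.mk.inj h).2))
    rw [hvw]
  · rintro ⟨_ | k, v⟩ hv
    · exact absurd hv (lt_irrefl _)
    · exact Sigma.ext rfl (heq_of_eq (congrArg Subtype.val (he k v)).symm)
  · rintro ⟨j, v⟩ ⟨_ | k, w⟩ h
    · have hdepth := congrArg Sigma.fst h
      simp only [up, φ] at hdepth
      omega
    · obtain rfl : k = N + j := congrArg Sigma.fst h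
      refine hrange (j + 1) w ?_
      have hparent : t.parent (N + j) w = (e j v).1 := eq_of_heq (Sigma.mk.inj h).2
      exact (congrArg (t.ancestor N j) hparent).trans (e j v).2
  · refine (Set.finite_range fun z : (Σ k : Fin (N + K), t.level k) =>
      (⟨z.1, z.2⟩ : t.Vertex)).subset ?_
    rintro ⟨k, v⟩ hv
    by_cases hk : k < N + K
    · exact ⟨⟨⟨k, hk⟩, v⟩, rfl⟩
    · obtain ⟨j, rfl⟩ := Nat.exists_eq_add_of_le (Nat.le_of_add_right_le (not_lt.1 hk))
      exact absurd (hrange j v (hK N j (by omega) v)) hv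

end RTree

theorem FDDS.Periodic.isUnrollTree_of_tprod_iso {A B : FDDS} {u : A.S} {v : B.S} {x : RTree}
    (hu : A.Periodic u) (hv : B.Periodic v)
    (h : ((A.unrollTree u).tprod x).Iso (B.unrollTree v)) : IsUnrollTree x := by
  have hbranch := (isTrunk_branch hu).isBranch
  obtain ⟨c, hc⟩ := (isTrunk_branch hv).exists_of_iso h
  have hb := hc.snd (branch hu)
  have hpos := Nat.mul_pos hu.minPeriod_pos hv.minPeriod_pos
  have hshift := shiftTree_tprod_descendants_iso hb.isBranch hu hv h (A.minPeriod u * B.minPeriod v)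
  rw [shiftTree, shiftTree, hu.shiftState_of_minPeriod_dvd (dvd_mul_right _ _),
    hv.shiftState_of_minPeriod_dvd (dvd_mul_left _ _)] at hshift
  obtain ⟨φ⟩ := hb.nonempty_selfEmbedding hpos
    (hbranch.iso_of_tprod_iso_tprod (h.trans hshift.symm))
  exact φ.isUnrollTree

/-! ### Sub-multisets of an unroll -/

theorem FDDS.mem_unroll {A : FDDS} {t : RTree} :
    t ∈ A.unroll ↔ ∃ u, A.Periodic u ∧ A.unrollTree u = t := by
  simp only [unroll, List.mem_map, Finset.mem_toList, Finset.mem_filter, Finset.mem_univ, true_and]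

theorem ForestLe.exists_iso {F G : Forest} (h : ForestLe F G) {t : RTree} (ht : t ∈ F) :
    ∃ s ∈ G, t.Iso s := by
  obtain ⟨H, hH, hrel⟩ := h
  obtain ⟨s, hs, hts⟩ := Multiset.exists_mem_of_rel_of_mem hrel (Multiset.mem_coe.2 ht)
  exact ⟨s, Multiset.mem_coe.1 (Multiset.mem_of_le hH hs), hts⟩

theorem ForestLe.of_pairwise_not_iso {F G : Forest} (hF : F.Pairwise fun t s => ¬ t.Iso s)
    (h : ∀ t ∈ F, ∃ s ∈ G, t.Iso s) : ForestLe F G := by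
  have : Nonempty RTree := ⟨rollRoot []⟩
  choose! g hgG hg using h
  have hnodup : (F.map g).Nodup := List.pairwise_map.2 <| hF.imp_of_mem fun {t s} ht hs hts hgts =>
    hts ((hg t ht).trans (hgts ▸ (hg s hs).symm))
  have hsubset : F.map g ⊆ G := by
    intro s hs
    obtain ⟨t, ht, rfl⟩ := List.mem_map.1 hs
    exact hgG t ht
  refine ⟨↑(F.map g), Multiset.coe_le.2 (hnodup.subperm hsubset), ?_⟩
  rw [← Multiset.map_coe, Multiset.rel_map_right]
  exact Multiset.rel_refl_of_refl_on hg

theorem FDDS.Periodic.exists_tprod_iso_of_forestLe {A B : FDDS} {u : A.S} {x : RTree}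
    (hu : A.Periodic u)
    (h : ForestLe ((List.range (A.shiftCount u)).map fun i => (A.shiftTree u i).tprod x) B.unroll)
    (i : ℕ) : ∃ v, B.Periodic v ∧ ((A.shiftTree u i).tprod x).Iso (B.unrollTree v) := by
  have hlt : i % A.shiftCount u < A.shiftCount u := Nat.mod_lt _ hu.patternSize_shiftCount.1
  obtain ⟨s, hs, hiso⟩ := h.exists_iso (List.mem_map_of_mem (List.mem_range.2 hlt))
  obtain ⟨v, hv, rfl⟩ := mem_unroll.1 hs
  exact ⟨v, hv, ((hu.shiftTree_mod_shiftCount_iso i).symm.tprod (.refl x)).trans hiso⟩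

theorem FDDS.Periodic.exists_unrollTree_tprod_shiftTree_iso {A B C : FDDS} {u : A.S} {w : C.S}
    (hu : A.Periodic u) (hw : C.Periodic w)
    (h : ∀ i, ∃ v, B.Periodic v ∧
      ((A.shiftTree u i).tprod (C.unrollTree w)).Iso (B.unrollTree v)) (j : ℕ) :
    ∃ v, B.Periodic v ∧ ((A.unrollTree u).tprod (C.shiftTree w j)).Iso (B.unrollTree v) := by
  obtain ⟨i, hi⟩ := hu.exists_shiftState_add_eq_self j
  obtain ⟨v, hv, hiso⟩ := h i
  have hshift := shiftTree_tprod_shiftTree_iso (hu.shiftState i) hw hv hiso j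
  rw [shiftTree, hu.shiftState_shiftState, Nat.add_comm, hi] at hshift
  exact ⟨_, hv.shiftState j, hshift⟩

theorem FDDS.Periodic.pairwise_not_tprod_shiftTree_iso {C : FDDS} {w : C.S} (hw : C.Periodic w)
    {t : RTree} {b : ∀ k, t.level k} (hb : t.IsBranch b) :
    ((List.range (C.shiftCount w)).map fun j => t.tprod (C.shiftTree w j)).Pairwise
      fun t s => ¬ t.Iso s := by
  refine List.pairwise_map.2 (List.pairwise_lt_range.imp_of_mem fun _ hj hij hiso => ?_)
  exact hw.not_shiftTree_iso_of_lt hij (List.mem_range.1 hj) (hb.iso_of_tprod_iso_tprod hiso)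

/-- Let `A, B` be FDDS, `t_a = t_{u_a}` an unroll tree of `𝒰(A)` and
`t_b = t_{u_b}` an unroll tree of `𝒰(B)`. Suppose there is an infinite rooted tree `x`
(with finitely many vertices at each depth) with `t_a·x = t_b` and such that the multiset
`{σ^i(t_a)·x : 0 ≤ i < |Shift(t_a)|}` is a sub-multiset of `𝒰(B)`. Then `x` is an unroll
tree, and the multiset `{t_a·σ^j(x) : 0 ≤ j < |Shift(x)|}` is a sub-multiset of `𝒰(B)`. -/
theorem stmt12 (A B : FDDS) (ua : A.S) (hua : A.Periodic ua) (ub : B.S) (hub : B.Periodic ub)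
    (x : RTree) (hxinf : ¬ x.IsFinite)
    (hprod : RTree.Iso (RTree.tprod (A.unrollTree ua) x) (B.unrollTree ub))
    (hsub : ForestLe
      ((List.range (A.shiftCount ua)).map fun i => RTree.tprod (A.shiftTree ua i) x)
      (FDDS.unroll B)) :
    IsUnrollTree x ∧
      ∃ (C : FDDS) (w : C.S), C.Periodic w ∧ RTree.Iso x (C.unrollTree w) ∧
        ForestLe
          ((List.range (C.shiftCount w)).map fun j =>
            RTree.tprod (A.unrollTree ua) (C.shiftTree w j))
          (FDDS.unroll B) := by
  have hx : IsUnrollTree x := hua.isUnrollTree_of_tprod_iso hub hprod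
  refine ⟨hx, ?_⟩
  obtain ⟨C, w, hw, hxw⟩ := hx
  have hA (i : ℕ) : ∃ v, B.Periodic v ∧
      ((A.shiftTree ua i).tprod (C.unrollTree w)).Iso (B.unrollTree v) := by
    obtain ⟨v, hv, hiso⟩ := hua.exists_tprod_iso_of_forestLe hsub i
    exact ⟨v, hv, ((RTree.Iso.refl _).tprod hxw.symm).trans hiso⟩
  refine ⟨C, w, hw, hxw, .of_pairwise_not_iso
    (hw.pairwise_not_tprod_shiftTree_iso (FDDS.isTrunk_branch hua).isBranch) fun t ht => ?_⟩
  obtain ⟨j, -, rfl⟩ := List.mem_map.1 ht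
  obtain ⟨v, hv, hiso⟩ := hua.exists_unrollTree_tprod_shiftTree_iso hw hA j
  exact ⟨_, FDDS.mem_unroll.2 ⟨v, hv, rfl⟩, hiso⟩
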